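/- arXiv:2112.02716 — 5 statements merged into one kernel-verified Lean document; each statement's English description precedes it below -/
import Mathlib

section
/- Let F be a division ring, n ≥ 1, γ_1, …, γ_n ∈ F, and let Γ ∈ F^{n×n} be the two-diagonal matrix with Γ_{jj} = γ_j for all j, Γ_{j+1,j} = 1 for j = 1, …, n−1, and all other entries 0. Then for every k ∈ {1, …, n}: {f ∈ F[z] : (e_k f)^ℓ(Γ) = 0} = (ρ_{γ_k}·ρ_{γ_{k+1}}·…·ρ_{γ_n})·F[z] and {f ∈ F[z] : (f e_k^T)^r(Γ) = 0} = F[z]·(ρ_{γ_1}·ρ_{γ_2}·…·ρ_{γ_k}); that is, the minimal polynomial of the input pair (Γ, e_k) is ρ_{γ_k}ρ_{γ_{k+1}}⋯ρ_{γ_n} and the minimal polynomial of the output pair (e_k^T, Γ) is ρ_{γ_1}ρ_{γ_2}⋯ρ_{γ_k}. -/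
/-!
Both evaluations are additive in `f`, and a linear factor adjacent to the vector can be absorbed
into it: `(v (ρ_a g))^ℓ(A) = ((A v - v a) g)^ℓ(A)` and `((g ρ_a) u)^r(A) = (g (u A - a u))^r(A)`.
For the two-diagonal matrix, `Γ e_k - e_k γ_k = e_{k+1}` and `e_kᵀ Γ - γ_k e_kᵀ = e_{k-1}ᵀ`, where
basis vectors with index out of range are `0`. Dividing `f = ρ_{γ_k} g + c` therefore gives
`(e_k f)^ℓ(Γ) = (e_{k+1} g)^ℓ(Γ) + e_k c`. The first summand is supported on coordinates `> k`, so
the whole vanishes iff `c = 0` and `(e_{k+1} g)^ℓ(Γ) = 0`, and induction on `n - k` finishes the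
proof. The right-hand case is the mirror image, with induction on `k`.
-/

open Polynomial Matrix Finset

section Defs

variable {F : Type*} [DivisionRing F]

/-- The scalar `c` regarded as a `1 × 1` matrix. -/
noncomputable def oneByOne (c : F) : Matrix (Fin 1) (Fin 1) F := Matrix.of fun _ _ => c

/-- Left evaluation `(v f)^{𝔢ℓ}(A) := ∑ⱼ Aʲ v fⱼ` of `f ∈ F[z]` at an input pair `(A, v)`. -/
noncomputable def leftEval {m : Type*} [Fintype m] [DecidableEq m]
    (A : Matrix m m F) (v : Matrix m (Fin 1) F) (f : F[X]) : Matrix m (Fin 1) F :=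
  ∑ j ∈ Finset.range (f.natDegree + 1), A ^ j * v * oneByOne (f.coeff j)

/-- Right evaluation `(f u)^{𝔢r}(A) := ∑ⱼ fⱼ u Aʲ` of `f ∈ F[z]` at an output pair `(u, A)`. -/
noncomputable def rightEval {m : Type*} [Fintype m] [DecidableEq m]
    (u : Matrix (Fin 1) m F) (A : Matrix m m F) (f : F[X]) : Matrix (Fin 1) m F :=
  ∑ j ∈ Finset.range (f.natDegree + 1), oneByOne (f.coeff j) * u * A ^ j

/-- Controllability matrix `[v, Av, …, A^{n-1} v]`. -/
noncomputable def ctrbMat {n : ℕ} (A : Matrix (Fin n) (Fin n) F)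
    (v : Matrix (Fin n) (Fin 1) F) : Matrix (Fin n) (Fin n) F :=
  Matrix.of fun i j => (A ^ (j : ℕ) * v) i 0

/-- Observability matrix with rows `u, uA, …, u A^{n-1}`. -/
noncomputable def obsMat {n : ℕ} (u : Matrix (Fin 1) (Fin n) F)
    (A : Matrix (Fin n) (Fin n) F) : Matrix (Fin n) (Fin n) F :=
  Matrix.of fun i j => (u * A ^ (i : ℕ)) 0 j

/-- Left companion matrix of a (monic, degree `n`) polynomial: its columns are
`e₂, …, eₙ, -(p₀, …, p_{n-1})ᵀ`. -/
noncomputable def Cl (n : ℕ) (p : F[X]) : Matrix (Fin n) (Fin n) F :=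
  Matrix.of fun i j =>
    if (j : ℕ) = n - 1 then -(p.coeff (i : ℕ)) else if (i : ℕ) = (j : ℕ) + 1 then 1 else 0

/-- Right companion matrix: the transpose of the left one. -/
noncomputable def Cr (n : ℕ) (p : F[X]) : Matrix (Fin n) (Fin n) F := (Cl n p)ᵀ

/-- First standard basis column vector of `F^{n×1}`. -/
noncomputable def e1 (F : Type*) [DivisionRing F] (n : ℕ) : Matrix (Fin n) (Fin 1) F :=
  Matrix.of fun i _ => if (i : ℕ) = 0 then 1 else 0

/-- First standard basis row vector of `F^{1×n}`. -/
noncomputable def e1row (F : Type*) [DivisionRing F] (n : ℕ) : Matrix (Fin 1) (Fin n) F :=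
  Matrix.of fun _ j => if (j : ℕ) = 0 then 1 else 0

/-- Two-sided evaluation `(v f u)^{𝔢ts}(A,B) := ∑_{i+j+1 ≤ deg f} Aⁱ v f_{i+j+1} u Bʲ`. -/
noncomputable def tsEval {n k : ℕ} (A : Matrix (Fin n) (Fin n) F) (B : Matrix (Fin k) (Fin k) F)
    (v : Matrix (Fin n) (Fin 1) F) (u : Matrix (Fin 1) (Fin k) F) (f : F[X]) :
    Matrix (Fin n) (Fin k) F :=
  ∑ i ∈ Finset.range f.natDegree, ∑ j ∈ Finset.range f.natDegree,
    A ^ i * v * oneByOne (f.coeff (i + j + 1)) * u * B ^ j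

end Defs

/-! ### Scalars as `1 × 1` matrices -/

section Helpers

variable {F : Type*} [DivisionRing F]

lemma oneByOne_zero : oneByOne (0 : F) = 0 := by
  ext; simp [oneByOne]

lemma oneByOne_add (a b : F) : oneByOne (a + b) = oneByOne a + oneByOne b := by
  ext; simp [oneByOne]

lemma oneByOne_mul (a b : F) : oneByOne (a * b) = oneByOne a * oneByOne b := by
  ext; simp [oneByOne, Matrix.mul_apply]

lemma mul_oneByOne_apply {m : Type*} (v : Matrix m (Fin 1) F) (c : F) (i : m) (j : Fin 1) :
    (v * oneByOne c) i j = v i 0 * c := by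
  simp [oneByOne, Matrix.mul_apply]

lemma oneByOne_mul_apply {m : Type*} (u : Matrix (Fin 1) m F) (c : F) (i : Fin 1) (j : m) :
    (oneByOne c * u) i j = c * u 0 j := by
  simp [oneByOne, Matrix.mul_apply]

/-! ### One-sided evaluation -/

section Eval

variable {m : Type*} [Fintype m] [DecidableEq m]

lemma leftEval_eq_sum (A : Matrix m m F) (v : Matrix m (Fin 1) F) (f : F[X]) :
    leftEval A v f = f.sum fun j c => A ^ j * v * oneByOne c := by
  rw [leftEval, Polynomial.sum_over_range]
  simp [oneByOne_zero]

lemma rightEval_eq_sum (u : Matrix (Fin 1) m F) (A : Matrix m m F) (f : F[X]) :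
    rightEval u A f = f.sum fun j c => oneByOne c * u * A ^ j := by
  rw [rightEval, Polynomial.sum_over_range]
  simp [oneByOne_zero]

lemma leftEval_add (A : Matrix m m F) (v : Matrix m (Fin 1) F) (f g : F[X]) :
    leftEval A v (f + g) = leftEval A v f + leftEval A v g := by
  simp only [leftEval_eq_sum]
  exact Polynomial.sum_add_index _ _ _ (by simp [oneByOne_zero])
    (by simp [oneByOne_add, Matrix.mul_add])

lemma rightEval_add (u : Matrix (Fin 1) m F) (A : Matrix m m F) (f g : F[X]) :
    rightEval u A (f + g) = rightEval u A f + rightEval u A g := by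
  simp only [rightEval_eq_sum]
  exact Polynomial.sum_add_index _ _ _ (by simp [oneByOne_zero])
    (by simp [oneByOne_add, Matrix.add_mul])

lemma leftEval_monomial (A : Matrix m m F) (v : Matrix m (Fin 1) F) (n : ℕ) (c : F) :
    leftEval A v (monomial n c) = A ^ n * v * oneByOne c := by
  rw [leftEval_eq_sum, Polynomial.sum_monomial_index]
  simp [oneByOne_zero]

lemma rightEval_monomial (u : Matrix (Fin 1) m F) (A : Matrix m m F) (n : ℕ) (c : F) :
    rightEval u A (monomial n c) = oneByOne c * u * A ^ n := by
  rw [rightEval_eq_sum, Polynomial.sum_monomial_index]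
  simp [oneByOne_zero]

lemma leftEval_C (A : Matrix m m F) (v : Matrix m (Fin 1) F) (c : F) :
    leftEval A v (Polynomial.C c) = v * oneByOne c := by
  rw [← Polynomial.monomial_zero_left, leftEval_monomial, pow_zero, Matrix.one_mul]

lemma rightEval_C (u : Matrix (Fin 1) m F) (A : Matrix m m F) (c : F) :
    rightEval u A (Polynomial.C c) = oneByOne c * u := by
  rw [← Polynomial.monomial_zero_left, rightEval_monomial, pow_zero, Matrix.mul_one]

lemma leftEval_zero_vec (A : Matrix m m F) (f : F[X]) : leftEval A 0 f = 0 := by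
  simp [leftEval]

lemma rightEval_zero_vec (A : Matrix m m F) (f : F[X]) : rightEval 0 A f = 0 := by
  simp [rightEval]

/-- A linear factor on the left is absorbed into the vector. -/
lemma leftEval_X_sub_C_mul (A : Matrix m m F) (v w : Matrix m (Fin 1) F) (a : F)
    (h : A * v = v * oneByOne a + w) (g : F[X]) :
    leftEval A v ((X - Polynomial.C a) * g) = leftEval A w g := by
  induction g using Polynomial.induction_on' with
  | add p q hp hq => rw [mul_add, leftEval_add, leftEval_add, hp, hq]
  | monomial n c =>
    have e : (X - Polynomial.C a) * monomial n c + monomial n (a * c)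
        = monomial (n + 1) c := by
      rw [sub_mul, Polynomial.X_mul_monomial, Polynomial.C_mul_monomial, sub_add_cancel]
    have e2 := congrArg (leftEval A v) e
    rw [leftEval_add, leftEval_monomial, leftEval_monomial, pow_succ, Matrix.mul_assoc (A ^ n) A v,
      h, oneByOne_mul, Matrix.mul_add, Matrix.add_mul, add_comm] at e2
    simp only [Matrix.mul_assoc] at e2
    rw [add_left_cancel e2, leftEval_monomial, Matrix.mul_assoc]

/-- A linear factor on the right is absorbed into the vector. -/
lemma rightEval_mul_X_sub_C (A : Matrix m m F) (u w : Matrix (Fin 1) m F) (a : F)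
    (h : u * A = oneByOne a * u + w) (g : F[X]) :
    rightEval u A (g * (X - Polynomial.C a)) = rightEval w A g := by
  induction g using Polynomial.induction_on' with
  | add p q hp hq => rw [add_mul, rightEval_add, rightEval_add, hp, hq]
  | monomial n c =>
    have e : monomial n c * (X - Polynomial.C a) + monomial n (c * a)
        = monomial (n + 1) c := by
      rw [mul_sub, Polynomial.monomial_mul_X, Polynomial.monomial_mul_C, sub_add_cancel]
    have e2 := congrArg (rightEval u A) e
    rw [rightEval_add, rightEval_monomial, rightEval_monomial, pow_succ', ← Matrix.mul_assoc _ A,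
      Matrix.mul_assoc _ u A, h, oneByOne_mul, Matrix.mul_add, Matrix.add_mul, add_comm] at e2
    simp only [← Matrix.mul_assoc] at e2
    rw [add_left_cancel e2, rightEval_monomial]

end Eval

/-! ### Division by a linear factor -/

lemma exists_eq_X_sub_C_mul_add (a : F) (f : F[X]) :
    ∃ (g : F[X]) (c : F), f = (X - Polynomial.C a) * g + Polynomial.C c := by
  induction f using Polynomial.induction_on' with
  | add p q hp hq =>
    obtain ⟨g, c, rfl⟩ := hp
    obtain ⟨g', c', rfl⟩ := hq
    exact ⟨g + g', c + c', by rw [mul_add, Polynomial.C_add]; abel⟩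
  | monomial n b =>
    induction n generalizing b with
    | zero => exact ⟨0, b, by simp⟩
    | succ n ih =>
      obtain ⟨g, c, h⟩ := ih (a * b)
      refine ⟨monomial n b + g, c, ?_⟩
      rw [mul_add, add_assoc, ← h, sub_mul, Polynomial.X_mul_monomial, Polynomial.C_mul_monomial,
        sub_add_cancel]

lemma exists_eq_mul_X_sub_C_add (a : F) (f : F[X]) :
    ∃ (g : F[X]) (c : F), f = g * (X - Polynomial.C a) + Polynomial.C c := by
  induction f using Polynomial.induction_on' with
  | add p q hp hq =>
    obtain ⟨g, c, rfl⟩ := hp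
    obtain ⟨g', c', rfl⟩ := hq
    exact ⟨g + g', c + c', by rw [add_mul, Polynomial.C_add]; abel⟩
  | monomial n b =>
    induction n generalizing b with
    | zero => exact ⟨0, b, by simp⟩
    | succ n ih =>
      obtain ⟨g, c, h⟩ := ih (b * a)
      refine ⟨monomial n b + g, c, ?_⟩
      rw [add_mul, add_assoc, ← h, mul_sub, Polynomial.monomial_mul_X, Polynomial.monomial_mul_C,
        sub_add_cancel]

/-! ### The two-diagonal matrix -/

/-- Basis column with 0-based index `i`, equal to `0` when `i ≥ n`. -/
def colVec (F : Type*) [DivisionRing F] (n i : ℕ) : Matrix (Fin n) (Fin 1) F :=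
  Matrix.of fun r _ => if (r : ℕ) = i then 1 else 0

/-- Basis row whose nonzero entry has 1-based position `i`; it is `0` when `i = 0`. -/
def rowVec (F : Type*) [DivisionRing F] (n i : ℕ) : Matrix (Fin 1) (Fin n) F :=
  Matrix.of fun _ c => if (c : ℕ) + 1 = i then 1 else 0

/-- The two-diagonal matrix with diagonal `γ` and subdiagonal `1`. -/
def twoDiag {n : ℕ} (γ : Fin n → F) : Matrix (Fin n) (Fin n) F :=
  Matrix.of fun i j => if i = j then γ j else if (i : ℕ) = (j : ℕ) + 1 then 1 else 0

lemma twoDiag_mul_colVec {n : ℕ} (γ : Fin n → F) (k : Fin n) :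
    twoDiag γ * colVec F n k = colVec F n k * oneByOne (γ k) + colVec F n (k + 1) := by
  ext i j
  simp only [Matrix.add_apply, mul_oneByOne_apply]
  simp only [Matrix.mul_apply, twoDiag, colVec, Matrix.of_apply, Fin.val_inj, mul_ite, mul_one,
    mul_zero, Finset.sum_ite_eq', Finset.mem_univ, if_true, ite_mul, one_mul, zero_mul]
  by_cases h : i = k
  · subst h; simp
  · simp [h]

lemma rowVec_mul_twoDiag {n : ℕ} (γ : Fin n → F) (k : Fin n) :
    rowVec F n (k + 1) * twoDiag γ = oneByOne (γ k) * rowVec F n (k + 1) + rowVec F n k := by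
  ext i j
  have hsum : (rowVec F n (k + 1) * twoDiag γ) i j = twoDiag γ k j := by
    rw [Matrix.mul_apply, Finset.sum_eq_single k]
    · simp [rowVec]
    · intro b _ hb
      simp [rowVec, Fin.val_inj, hb]
    · simp
  rw [hsum, Matrix.add_apply, oneByOne_mul_apply]
  by_cases h : j = k
  · subst h; simp [twoDiag, rowVec]
  · simp [twoDiag, rowVec, Fin.val_inj, Ne.symm h, eq_comm]

/-! ### Minimal polynomials of basis vectors -/

/-- The support claim is what forces the constant remainder to vanish in the inductive step. -/
lemma left_aux {n : ℕ} (γ : Fin n → F) (d : ℕ) : ∀ k : ℕ, k + d = n → ∀ f : F[X],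
    (∀ r : Fin n, (r : ℕ) < k → leftEval (twoDiag γ) (colVec F n k) f r 0 = 0) ∧
    (leftEval (twoDiag γ) (colVec F n k) f = 0 ↔
      ∃ h : F[X],
        f = (((List.finRange n).drop k).map fun j => X - Polynomial.C (γ j)).prod * h) := by
  induction d with
  | zero =>
    intro k hk f
    have h0 : colVec F n k = 0 := by
      ext r c
      have := r.2
      simp only [colVec, Matrix.of_apply, Matrix.zero_apply]
      rw [if_neg (by omega)]
    rw [h0, leftEval_zero_vec, List.drop_of_length_le (by simp; omega)]
    simp
  | succ d ih =>
    intro k hk f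
    have hkn : k < n := by omega
    have key : ∀ (g : F[X]) (c : F), leftEval (twoDiag γ) (colVec F n k)
        ((X - Polynomial.C (γ ⟨k, hkn⟩)) * g + Polynomial.C c)
        = leftEval (twoDiag γ) (colVec F n (k + 1)) g + colVec F n k * oneByOne c := by
      intro g c
      rw [leftEval_add, leftEval_C,
        leftEval_X_sub_C_mul _ _ _ _ (twoDiag_mul_colVec γ ⟨k, hkn⟩)]
    have hdrop : (List.finRange n).drop k = ⟨k, hkn⟩ :: (List.finRange n).drop (k + 1) := by
      rw [List.drop_eq_getElem_cons (by simpa using hkn)]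
      simp
    rw [hdrop, List.map_cons, List.prod_cons]
    obtain ⟨g, c, rfl⟩ := exists_eq_X_sub_C_mul_add (γ ⟨k, hkn⟩) f
    obtain ⟨hs, hz⟩ := ih (k + 1) (by omega) g
    refine ⟨fun r hr => ?_, fun h => ?_, ?_⟩
    · rw [key, Matrix.add_apply, hs r (by omega), mul_oneByOne_apply]
      simp [colVec, hr.ne]
    · rw [key] at h
      have hc : c = 0 := by
        have := congrFun (congrFun h ⟨k, hkn⟩) 0
        rw [Matrix.add_apply, hs ⟨k, hkn⟩ (Nat.lt_succ_self k), mul_oneByOne_apply] at this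
        simpa [colVec] using this
      subst hc
      rw [oneByOne_zero, Matrix.mul_zero, add_zero] at h
      obtain ⟨q, rfl⟩ := hz.1 h
      exact ⟨q, by rw [Polynomial.C_0, add_zero, mul_assoc]⟩
    · rintro ⟨q, hq⟩
      rw [hq, mul_assoc]
      have := key ((((List.finRange n).drop (k + 1)).map fun j => X - Polynomial.C (γ j)).prod * q) 0
      rw [Polynomial.C_0, add_zero, oneByOne_zero, Matrix.mul_zero, add_zero] at this
      rw [this]
      exact (ih (k + 1) (by omega) _).2.2 ⟨q, rfl⟩

/-- Mirror image of `left_aux`. -/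
lemma right_aux {n : ℕ} (γ : Fin n → F) (k : ℕ) : k ≤ n → ∀ f : F[X],
    (∀ r : Fin n, k ≤ (r : ℕ) → rightEval (rowVec F n k) (twoDiag γ) f 0 r = 0) ∧
    (rightEval (rowVec F n k) (twoDiag γ) f = 0 ↔
      ∃ h : F[X],
        f = h * (((List.finRange n).take k).map fun j => X - Polynomial.C (γ j)).prod) := by
  induction k with
  | zero =>
    intro _ f
    have h0 : rowVec F n 0 = 0 := by
      ext r c
      simp [rowVec]
    rw [h0, rightEval_zero_vec]
    simp
  | succ k ih =>
    intro hk f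
    have hkn : k < n := by omega
    have key : ∀ (g : F[X]) (c : F), rightEval (rowVec F n (k + 1)) (twoDiag γ)
        (g * (X - Polynomial.C (γ ⟨k, hkn⟩)) + Polynomial.C c)
        = rightEval (rowVec F n k) (twoDiag γ) g + oneByOne c * rowVec F n (k + 1) := by
      intro g c
      rw [rightEval_add, rightEval_C,
        rightEval_mul_X_sub_C _ _ _ _ (rowVec_mul_twoDiag γ ⟨k, hkn⟩)]
    have htake : (List.finRange n).take (k + 1) = (List.finRange n).take k ++ [⟨k, hkn⟩] := by
      rw [List.take_succ_eq_append_getElem (by simpa using hkn)]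
      simp
    rw [htake, List.map_append, List.prod_append, List.map_singleton, List.prod_singleton]
    obtain ⟨g, c, rfl⟩ := exists_eq_mul_X_sub_C_add (γ ⟨k, hkn⟩) f
    obtain ⟨hs, hz⟩ := ih (by omega) g
    refine ⟨fun r hr => ?_, fun h => ?_, ?_⟩
    · rw [key, Matrix.add_apply, hs r (by omega), oneByOne_mul_apply]
      have : (r : ℕ) ≠ k := by omega
      simp [rowVec, this]
    · rw [key] at h
      have hc : c = 0 := by
        have := congrFun (congrFun h 0) ⟨k, hkn⟩
        rw [Matrix.add_apply, hs ⟨k, hkn⟩ le_rfl, oneByOne_mul_apply] at this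
        simpa [rowVec] using this
      subst hc
      rw [oneByOne_zero, Matrix.zero_mul, add_zero] at h
      obtain ⟨q, rfl⟩ := hz.1 h
      exact ⟨q, by rw [Polynomial.C_0, add_zero, mul_assoc]⟩
    · rintro ⟨q, hq⟩
      rw [hq, ← mul_assoc]
      have := key (q * (((List.finRange n).take k).map fun j => X - Polynomial.C (γ j)).prod) 0
      rw [Polynomial.C_0, add_zero, oneByOne_zero, Matrix.zero_mul, add_zero] at this
      rw [this]
      exact (ih (by omega) _).2.2 ⟨q, rfl⟩

end Helpers

/-- Proposition on the two-diagonal matrix `Γ`: the minimal polynomial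
of the input pair `(Γ, e_k)` is `ρ_{γ_k}⋯ρ_{γ_n}` and that of the output pair
`(e_kᵀ, Γ)` is `ρ_{γ_1}⋯ρ_{γ_k}`. -/
theorem statement1 {F : Type*} [DivisionRing F] {n : ℕ} (hn : 1 ≤ n) (γ : Fin n → F)
    (Γ : Matrix (Fin n) (Fin n) F)
    (hΓ : Γ = Matrix.of fun i j =>
      if i = j then γ j else if (i : ℕ) = (j : ℕ) + 1 then 1 else 0)
    (k : Fin n) (f : F[X]) :
    (leftEval Γ (Matrix.of fun i _ => if i = k then (1 : F) else 0) f = 0 ↔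
      ∃ h : F[X],
        f = (((List.finRange n).drop (k : ℕ)).map fun j => X - Polynomial.C (γ j)).prod * h) ∧
    (rightEval (Matrix.of fun _ j => if j = k then (1 : F) else 0) Γ f = 0 ↔
      ∃ h : F[X],
        f = h * (((List.finRange n).take ((k : ℕ) + 1)).map fun j => X - Polynomial.C (γ j)).prod) := by
  have hcol : (Matrix.of fun i _ => if i = k then (1 : F) else 0) = colVec F n k := by
    ext i j
    simp [colVec, Fin.ext_iff]
  have hrow : (Matrix.of fun _ j => if j = k then (1 : F) else 0) = rowVec F n (k + 1) := by
    ext i j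
    simp [rowVec, Fin.ext_iff]
  have hk := k.2
  subst hΓ
  rw [hcol, hrow]
  exact ⟨(left_aux γ (n - k) k (by omega) f).2, (right_aux γ (k + 1) hk f).2⟩
end

section
/- Let F be a division ring, n ≥ 1, and p ∈ F[z] monic of degree n. Then {f ∈ F[z] : Σ_j C_ℓ(p)^j f_j = 0} = p·F[z] = {f ∈ F[z] : (e_1 f)^ℓ(C_ℓ(p)) = 0}, and dually {f ∈ F[z] : Σ_j f_j C_r(p)^j = 0} = F[z]·p = {f ∈ F[z] : (f e_1^T)^r(C_r(p)) = 0}. In particular p^ℓ(C_ℓ(p)) := Σ_j C_ℓ(p)^j p_j = 0, p^r(C_r(p)) := Σ_j p_j C_r(p)^j = 0, the left minimal polynomial of C_ℓ(p), the right minimal polynomial of C_r(p), the minimal polynomial of the input pair (C_ℓ(p), e_1), and the minimal polynomial of the output pair (e_1^T, C_r(p)) all equal p. -/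
/-!
Via `v ↦ ∑ᵢ zⁱ vᵢ`, columns of length `n` are the right `F`-space `F[z] / p F[z]`, on which
`A = C_ℓ(p)` acts as multiplication by `z` and `e₁` is the class of `1`. So evaluating `f` at
`(A, e₁)` gives the class of `f`, which vanishes exactly on `p F[z]`.

Concretely, `Aʲ e₁ = e_{j+1}` for `j < n` (`Cl_pow_mul_e1`), hence `p` annihilates `(A, e₁)`
(`ev_e1_self`), and a polynomial of degree `< n` that annihilates `(A, e₁)` is zero
(`ev_e1_apply`). Annihilators are stable under right multiplication (`ev_mul`), and division with
remainder `f = p h + r` gives the claim for the pair. Since the basis vector `e_{k+1} = Aᵏ e₁`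
has central entries, column `k + 1` of the matrix evaluation `∑ⱼ Aʲ fⱼ` is `Aᵏ` times the
evaluation of `f` at `(A, e₁)` (`ev_one_mul`), so `A` and `(A, e₁)` have the same annihilators.

The dual statements are the same statements over the opposite division ring: entrywise `op`
followed by transposition reverses matrix products and carries `C_r(p)` to `C_ℓ(op p)`.
-/

open Polynomial Matrix Finset

section Left

variable {F : Type*} [DivisionRing F]

/-- Left evaluation `f ↦ ∑ⱼ Aʲ V fⱼ` for a rectangular `V`, where right multiplication by the
scalar `fⱼ` is encoded as multiplication by the scalar matrix `fⱼ • 1`. The choices `V = 1` and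
`V = e₁` give the evaluation at the matrix and at the input pair. -/
noncomputable def ev {m k : Type*} [Fintype m] [DecidableEq m] [Fintype k] [DecidableEq k]
    (A : Matrix m m F) (V : Matrix m k F) (f : F[X]) : Matrix m k F :=
  f.sum fun j c => A ^ j * V * (c • (1 : Matrix k k F))

section General

variable {m k : Type*} [Fintype m] [DecidableEq m] [Fintype k] [DecidableEq k]

lemma ev_eq_range (A : Matrix m m F) (V : Matrix m k F) (f : F[X]) {N : ℕ}
    (hN : f.natDegree < N) :
    ev A V f = ∑ j ∈ Finset.range N, A ^ j * V * (f.coeff j • (1 : Matrix k k F)) :=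
  Polynomial.sum_over_range' f (fun j => by simp) N hN

lemma ev_add (A : Matrix m m F) (V : Matrix m k F) (f g : F[X]) :
    ev A V (f + g) = ev A V f + ev A V g :=
  Polynomial.sum_add_index f g _ (fun j => by simp)
    (fun j a b => by rw [add_smul, Matrix.mul_add])

lemma ev_monomial (A : Matrix m m F) (V : Matrix m k F) (j : ℕ) (c : F) :
    ev A V (monomial j c) = A ^ j * V * (c • (1 : Matrix k k F)) :=
  Polynomial.sum_monomial_index c _ (by simp)

lemma ev_mul_monomial (A : Matrix m m F) (V : Matrix m k F) (f : F[X]) (l : ℕ) (c : F) :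
    ev A V (f * monomial l c) = A ^ l * ev A V f * (c • (1 : Matrix k k F)) := by
  induction f using Polynomial.induction_on' with
  | add f g hf hg => rw [add_mul, ev_add, ev_add, hf, hg, Matrix.mul_add, Matrix.add_mul]
  | monomial j a =>
    have h : ((a * c) • (1 : Matrix k k F)) = (a • 1) * (c • 1) := by
      rw [Matrix.smul_mul, Matrix.one_mul, smul_smul]
    rw [monomial_mul_monomial, ev_monomial, ev_monomial, h, add_comm, pow_add]
    simp only [Matrix.mul_assoc]

/-- The annihilator of `(A, V)` is stable under right multiplication, because
`ev A V (f zˡ c) = Aˡ (ev A V f) c`. -/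
lemma ev_mul (A : Matrix m m F) (V : Matrix m k F) {p : F[X]} (hp : ev A V p = 0) (h : F[X]) :
    ev A V (p * h) = 0 := by
  induction h using Polynomial.induction_on' with
  | add f g hf hg => rw [mul_add, ev_add, hf, hg, add_zero]
  | monomial j a => rw [ev_mul_monomial, hp, Matrix.mul_zero, Matrix.zero_mul]

end General

lemma oneByOne_eq (c : F) : oneByOne c = c • (1 : Matrix (Fin 1) (Fin 1) F) := by
  ext i j
  simp [oneByOne, Subsingleton.elim i j]

lemma leftEval_eq_ev {n : ℕ} (A : Matrix (Fin n) (Fin n) F) (v : Matrix (Fin n) (Fin 1) F)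
    (f : F[X]) : leftEval A v f = ev A v f := by
  rw [ev_eq_range A v f (Nat.lt_succ_self _)]
  simp [leftEval, oneByOne_eq]

variable {n : ℕ} {p : F[X]}

lemma Cl_pow_mul_e1 (p : F[X]) {j : ℕ} (hj : j < n) (i : Fin n) (x : Fin 1) :
    (Cl n p ^ j * e1 F n) i x = if (i : ℕ) = j then 1 else 0 := by
  induction j generalizing i with
  | zero => simp [e1]
  | succ j ih =>
    rw [pow_succ', Matrix.mul_assoc, Matrix.mul_apply,
      Finset.sum_eq_single (⟨j, by omega⟩ : Fin n)]
    · rw [ih (by omega)]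
      have : j ≠ n - 1 := by omega
      simp [Cl, this]
    · intro b _ hb
      rw [ih (by omega), if_neg (fun h => hb (Fin.ext h)), mul_zero]
    · simp

lemma Cl_pow_self_mul_e1 (hn : 1 ≤ n) (p : F[X]) (i : Fin n) (x : Fin 1) :
    (Cl n p ^ n * e1 F n) i x = -p.coeff i := by
  obtain ⟨m, rfl⟩ : ∃ m, n = m + 1 := ⟨n - 1, by omega⟩
  rw [pow_succ', Matrix.mul_assoc, Matrix.mul_apply, Finset.sum_eq_single (Fin.last m)]
  · rw [Cl_pow_mul_e1 p (by omega)]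
    simp [Cl]
  · intro b _ hb
    rw [Cl_pow_mul_e1 p (by omega), if_neg (fun h : (b : ℕ) = m => hb (Fin.ext h)), mul_zero]
  · simp

/-- The first `n` terms of the evaluation at `(C_ℓ(p), e₁)` list the coefficients. -/
lemma sum_range_e1 (p f : F[X]) (i : Fin n) (x : Fin 1) :
    (∑ j ∈ Finset.range n, Cl n p ^ j * e1 F n * (f.coeff j • (1 : Matrix (Fin 1) (Fin 1) F))) i x
      = f.coeff i := by
  rw [Matrix.sum_apply, Finset.sum_eq_single (i : ℕ)]
  · rw [Matrix.mul_apply]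
    simp [Cl_pow_mul_e1 p i.2, Subsingleton.elim x 0]
  · intro j hj hji
    rw [Matrix.mul_apply]
    simp [Cl_pow_mul_e1 p (Finset.mem_range.1 hj), hji.symm]
  · intro h
    exact absurd (Finset.mem_range.2 i.2) h

lemma ev_e1_apply (p : F[X]) {f : F[X]} (hf : f.natDegree < n) (i : Fin n) (x : Fin 1) :
    ev (Cl n p) (e1 F n) f i x = f.coeff i := by
  rw [ev_eq_range _ _ f hf, sum_range_e1]

lemma ev_e1_self (hn : 1 ≤ n) (hmon : p.Monic) (hdeg : p.natDegree = n) :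
    ev (Cl n p) (e1 F n) p = 0 := by
  have hlead : p.coeff n = 1 := by rw [← hdeg]; exact hmon
  ext i x
  rw [ev_eq_range _ _ p (N := n + 1) (by omega), Finset.sum_range_succ, Matrix.add_apply,
    sum_range_e1, hlead, one_smul, Matrix.mul_one, Cl_pow_self_mul_e1 hn]
  simp

lemma ev_e1_eq_zero_iff (hn : 1 ≤ n) (hmon : p.Monic) (hdeg : p.natDegree = n) (f : F[X]) :
    ev (Cl n p) (e1 F n) f = 0 ↔ ∃ h : F[X], f = p * h := by
  constructor
  · intro hf
    have hdiv := modByMonic_add_div f p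
    have hr : (f %ₘ p).natDegree < n := by
      rw [← hdeg]
      apply natDegree_modByMonic_lt f hmon
      rintro rfl
      simp at hdeg
      omega
    have hr0 : ev (Cl n p) (e1 F n) (f %ₘ p) = 0 := by
      rw [← hdiv, ev_add, ev_mul _ _ (ev_e1_self hn hmon hdeg), add_zero] at hf
      exact hf
    have : f %ₘ p = 0 := by
      ext i
      by_cases hi : i < n
      · rw [← ev_e1_apply p hr ⟨i, hi⟩ 0, hr0]
        simp
      · exact coeff_eq_zero_of_natDegree_lt (by omega)
    exact ⟨f /ₘ p, by rw [this, zero_add] at hdiv; exact hdiv.symm⟩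
  · rintro ⟨h, rfl⟩
    exact ev_mul _ _ (ev_e1_self hn hmon hdeg) h

/-- The `k`-th column (counted from `0`) of the matrix evaluation at `f` is `Aᵏ` applied to the
evaluation at `(A, e₁)`. -/
lemma ev_one_mul (p f : F[X]) {k : ℕ} (hk : k < n) :
    ev (Cl n p) (1 : Matrix (Fin n) (Fin n) F) f * (Cl n p ^ k * e1 F n) = Cl n p ^ k * ev (Cl n p) (e1 F n) f := by
  induction f using Polynomial.induction_on' with
  | add f g hf hg => rw [ev_add, ev_add, Matrix.add_mul, hf, hg, Matrix.mul_add]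
  | monomial j c =>
    -- scalars commute with `Aᵏ e₁`, a standard basis vector
    have hc : (c • (1 : Matrix (Fin n) (Fin n) F)) * (Cl n p ^ k * e1 F n)
        = Cl n p ^ k * e1 F n * (c • (1 : Matrix (Fin 1) (Fin 1) F)) := by
      ext i x
      rw [Matrix.smul_mul, Matrix.one_mul, Matrix.smul_apply, Matrix.mul_apply (N := c • 1)]
      simp [Cl_pow_mul_e1 p hk, Subsingleton.elim x 0]
    rw [ev_monomial, ev_monomial, Matrix.mul_one, Matrix.mul_assoc, hc]
    simp only [← Matrix.mul_assoc]
    rw [← pow_add, ← pow_add, add_comm]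

lemma ev_one_eq_zero_iff (hn : 1 ≤ n) (p f : F[X]) :
    ev (Cl n p) (1 : Matrix (Fin n) (Fin n) F) f = 0 ↔ ev (Cl n p) (e1 F n) f = 0 := by
  constructor
  · intro h
    have := ev_one_mul p f (k := 0) hn
    rw [h] at this
    simpa using this.symm
  · intro h
    ext i k
    have := congrFun (congrFun (ev_one_mul p f k.2) i) 0
    rw [h, Matrix.mul_zero, Matrix.mul_apply, Finset.sum_eq_single k] at this
    · simpa [Cl_pow_mul_e1 p k.2] using this
    · intro b _ hb
      rw [Cl_pow_mul_e1 p k.2, if_neg (fun h => hb (Fin.ext h)), mul_zero]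
    · simp

lemma matrix_left_iff (hn : 1 ≤ n) (hmon : p.Monic) (hdeg : p.natDegree = n) (f : F[X]) :
    ∑ j ∈ Finset.range (f.natDegree + 1),
        (Cl n p) ^ j * (f.coeff j • (1 : Matrix (Fin n) (Fin n) F)) = 0 ↔
      ∃ h : F[X], f = p * h := by
  rw [← ev_e1_eq_zero_iff hn hmon hdeg, ← ev_one_eq_zero_iff hn,
    ev_eq_range _ _ f (Nat.lt_succ_self _)]
  simp only [Matrix.mul_one, Nat.succ_eq_add_one]

lemma pair_left_iff (hn : 1 ≤ n) (hmon : p.Monic) (hdeg : p.natDegree = n) (f : F[X]) :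
    leftEval (Cl n p) (e1 F n) f = 0 ↔ ∃ h : F[X], f = p * h := by
  rw [leftEval_eq_ev, ev_e1_eq_zero_iff hn hmon hdeg]

end Left

section Right

open MulOpposite

variable {F : Type*} [DivisionRing F]

/-- Transposition into matrices over the opposite ring; it reverses products. -/
def opT {m k : Type*} (M : Matrix m k F) : Matrix k m Fᵐᵒᵖ := Matrix.of fun i j => op (M j i)

lemma opT_mul {m k l : Type*} [Fintype k] (M : Matrix m k F) (N : Matrix k l F) :
    opT (M * N) = opT N * opT M := by
  ext i j
  simp [opT, Matrix.mul_apply]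

lemma opT_one {m : Type*} [DecidableEq m] : opT (1 : Matrix m m F) = 1 := by
  ext i j
  simp only [opT, Matrix.of_apply, Matrix.one_apply, eq_comm (a := j)]
  split_ifs <;> rfl

lemma opT_pow {m : Type*} [Fintype m] [DecidableEq m] (M : Matrix m m F) (j : ℕ) :
    opT (M ^ j) = opT M ^ j := by
  induction j with
  | zero => simp [opT_one]
  | succ j ih => rw [pow_succ, opT_mul, ih, ← pow_succ']

lemma opT_sum {m k : Type*} (s : Finset ℕ) (M : ℕ → Matrix m k F) :
    opT (∑ j ∈ s, M j) = ∑ j ∈ s, opT (M j) := by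
  ext i j
  simp [opT, Matrix.sum_apply]

lemma opT_eq_zero {m k : Type*} {M : Matrix m k F} : opT M = 0 ↔ M = 0 := by
  constructor
  · intro h
    ext i j
    exact op_injective (congrFun (congrFun h j) i)
  · rintro rfl
    rfl

lemma opT_smul {m : Type*} [Fintype m] [DecidableEq m] (c : F) (M : Matrix m m F) :
    opT (c • M) = opT M * (op c • (1 : Matrix m m Fᵐᵒᵖ)) := by
  ext i j
  simp [opT, Matrix.mul_apply, Matrix.one_apply]

/-- The polynomial `p` regarded over the opposite ring. -/
noncomputable def opP (p : F[X]) : Fᵐᵒᵖ[X] := opRingEquiv F (op p)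

lemma opP_coeff (p : F[X]) (j : ℕ) : (opP p).coeff j = op (p.coeff j) := by
  simp [opP, coeff_opRingEquiv]

lemma opP_natDegree (p : F[X]) : (opP p).natDegree = p.natDegree := by
  simp [opP, natDegree_opRingEquiv]

lemma opP_monic {p : F[X]} (hp : p.Monic) : (opP p).Monic := by
  rw [Monic, leadingCoeff, opP_natDegree, opP_coeff]
  exact congrArg op hp

/-- Right multiples of `op p` are the left multiples of `p`. -/
lemma opP_dvd (p f : F[X]) : (∃ h, opP f = opP p * h) ↔ ∃ h, f = h * p := by
  constructor
  · rintro ⟨h, hh⟩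
    obtain ⟨g, rfl⟩ := (opRingEquiv F).surjective h
    rw [opP, opP, ← map_mul] at hh
    exact ⟨unop g, congrArg unop ((opRingEquiv F).injective hh)⟩
  · rintro ⟨h, rfl⟩
    exact ⟨opP h, by simp [opP]⟩

lemma opT_Cr (n : ℕ) (p : F[X]) : opT (Cr n p) = Cl n (opP p) := by
  ext i j
  simp only [opT, Cr, Cl, Matrix.of_apply, Matrix.transpose_apply, opP_coeff]
  split_ifs <;> rfl

lemma opT_e1row (n : ℕ) : opT (e1row F n) = e1 Fᵐᵒᵖ n := by
  ext i j
  simp only [opT, e1row, e1, Matrix.of_apply]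
  split_ifs <;> rfl

variable {n : ℕ} {p : F[X]}

lemma matrix_right_iff (hn : 1 ≤ n) (hmon : p.Monic) (hdeg : p.natDegree = n) (f : F[X]) :
    ∑ j ∈ Finset.range (f.natDegree + 1), f.coeff j • (Cr n p) ^ j = 0 ↔
      ∃ h : F[X], f = h * p := by
  rw [← opP_dvd, ← matrix_left_iff hn (opP_monic hmon) (by rw [opP_natDegree, hdeg]),
    ← opT_eq_zero, opT_sum]
  simp only [opT_smul, opT_pow, opT_Cr, opP_natDegree, opP_coeff]

lemma pair_right_iff (hn : 1 ≤ n) (hmon : p.Monic) (hdeg : p.natDegree = n) (f : F[X]) :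
    rightEval (e1row F n) (Cr n p) f = 0 ↔ ∃ h : F[X], f = h * p := by
  have hone (c : F) : opT (oneByOne c) = oneByOne (op c) := rfl
  rw [← opP_dvd, ← pair_left_iff hn (opP_monic hmon) (by rw [opP_natDegree, hdeg]),
    ← opT_eq_zero, rightEval, leftEval, opT_sum]
  simp only [opT_mul, opT_pow, opT_Cr, opT_e1row, hone, opP_natDegree, opP_coeff,
    Matrix.mul_assoc]

end Right

/-- Remark `P:2.9`: for monic `p` of degree `n`, the polynomials annihilating
`C_ℓ(p)` on the left (resp. `C_r(p)` on the right), and those annihilating the pairs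
`(C_ℓ(p), e₁)` and `(e₁ᵀ, C_r(p))`, are exactly the right (resp. left) multiples of `p`;
in particular `p^ℓ(C_ℓ(p)) = 0` and `p^r(C_r(p)) = 0`. -/
theorem statement2 {F : Type*} [DivisionRing F] {n : ℕ} (hn : 1 ≤ n) (p : F[X])
    (hmon : p.Monic) (hdeg : p.natDegree = n) :
    (∀ f : F[X],
      (∑ j ∈ Finset.range (f.natDegree + 1),
          (Cl n p) ^ j * (f.coeff j • (1 : Matrix (Fin n) (Fin n) F)) = 0 ↔
        ∃ h : F[X], f = p * h)) ∧
    (∀ f : F[X], leftEval (Cl n p) (e1 F n) f = 0 ↔ ∃ h : F[X], f = p * h) ∧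
    (∀ f : F[X],
      (∑ j ∈ Finset.range (f.natDegree + 1), f.coeff j • (Cr n p) ^ j = 0 ↔
        ∃ h : F[X], f = h * p)) ∧
    (∀ f : F[X], rightEval (e1row F n) (Cr n p) f = 0 ↔ ∃ h : F[X], f = h * p) ∧
    (∑ j ∈ Finset.range (p.natDegree + 1),
        (Cl n p) ^ j * (p.coeff j • (1 : Matrix (Fin n) (Fin n) F)) = 0) ∧
    (∑ j ∈ Finset.range (p.natDegree + 1), p.coeff j • (Cr n p) ^ j = 0) := by
  exact ⟨matrix_left_iff hn hmon hdeg, pair_left_iff hn hmon hdeg,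
    matrix_right_iff hn hmon hdeg, pair_right_iff hn hmon hdeg,
    (matrix_left_iff hn hmon hdeg p).2 ⟨1, (mul_one p).symm⟩,
    (matrix_right_iff hn hmon hdeg p).2 ⟨1, (one_mul p).symm⟩⟩
end

section
/- Let F be a division ring, n ≥ 1, p ∈ F[z] monic of degree n, and f ∈ F[z]. Write f = p·g + b by left division, with g ∈ F[z] and b(z) = b_0 + b_1 z + … + b_{n−1}z^{n−1} of degree < n. Let R_0 be the backward shift on F[z], R_0(Σ_j f_j z^j) := Σ_j f_{j+1} z^j, and set g_j := (R_0^j p)·g + R_0^j b ∈ F[z] for j = 1, …, n. Then: (i) g_n = g; (ii) (e_1 f)^ℓ(C_ℓ(p)) = (b_0, b_1, …, b_{n−1})^T; (iii) e_1·f(z) = (z·I_n − C_ℓ(p))·G(z) + (b_0, …, b_{n−1})^T, where G ∈ (F[z])^{n×1} is the column whose j-th entry is g_j. -/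
/-!
Put `g₀ = f` and `gⱼ = (R₀ʲ p) g + R₀ʲ b`. Since `R₀ʲ q = z R₀ʲ⁺¹ q + qⱼ`, these satisfy the
recursion `gⱼ = z gⱼ₊₁ + pⱼ g + bⱼ` (`quot_rec`), and `gₙ = g` because `R₀ⁿ p = 1` and `R₀ⁿ b = 0`.
Read row by row, the recursion is exactly the identity `e₁ f = (zI - C_ℓ(p)) G + b`.

The left evaluation then follows from a noncommutative remainder theorem (`leftEval_of_division`):
comparing coefficients of `zᵏ` in `v f = (zI - A) G + r`, with `G = ∑ Γₖ zᵏ`, gives `v f₀ = r - A Γ₀` and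
`v fₖ₊₁ = Γₖ - A Γₖ₊₁`, so that `∑ Aᵏ v fₖ` telescopes to `r`.
-/

open Polynomial Matrix Finset

lemma coeff_iterate_divX {F : Type*} [DivisionRing F] (j k : ℕ) (q : F[X]) :
    (Polynomial.divX^[j] q).coeff k = q.coeff (k + j) := by
  induction j generalizing k with
  | zero => rfl
  | succ j ih => rw [Function.iterate_succ_apply', coeff_divX, ih]; congr 1; omega

lemma iterate_divX_eq {F : Type*} [DivisionRing F] (j : ℕ) (q : F[X]) :
    Polynomial.divX^[j] q = X * Polynomial.divX^[j + 1] q + C (q.coeff j) := by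
  have h := X_mul_divX_add (Polynomial.divX^[j] q)
  rw [coeff_iterate_divX, zero_add] at h
  rw [Function.iterate_succ_apply', h]

/-- The recursion `gⱼ = z gⱼ₊₁ + pⱼ g + bⱼ`. -/
lemma quot_rec {F : Type*} [DivisionRing F] (p g b : F[X]) (j : ℕ) :
    Polynomial.divX^[j] p * g + Polynomial.divX^[j] b =
      X * (Polynomial.divX^[j + 1] p * g + Polynomial.divX^[j + 1] b) +
        C (p.coeff j) * g + C (b.coeff j) := by
  rw [iterate_divX_eq j p, iterate_divX_eq j b, add_mul, mul_add, mul_assoc]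
  abel

/-- Remainder theorem for left evaluation: if `v f = (zI - A) G + r` with `r` constant, then
the left evaluation of `f` at `(A, v)` is `r`. -/
lemma leftEval_of_division {F : Type*} [DivisionRing F] {m : Type*} [Fintype m] [DecidableEq m]
    (A : Matrix m m F) (v r : Matrix m (Fin 1) F) (f : F[X]) (G : m → F[X])
    (h : ∀ i, C (v i 0) * f = X * G i - ∑ j, C (A i j) * G j + C (r i 0)) :
    leftEval A v f = r := by
  -- the column of coefficients of `z^k` in `G`
  let Γ : ℕ → Matrix m (Fin 1) F := fun k => Matrix.of fun i _ => (G i).coeff k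
  have h0 : v * oneByOne (f.coeff 0) = r - A * Γ 0 := by
    ext i j
    obtain rfl : j = 0 := Subsingleton.elim _ _
    have := congrArg (fun q => coeff q 0) (h i)
    simp only [coeff_add, coeff_sub, mul_coeff_zero, coeff_X_zero, zero_mul,
      finsetSum_coeff, coeff_C_zero] at this
    simp only [Matrix.mul_apply, Matrix.sub_apply, oneByOne, Γ, Matrix.of_apply,
      Fin.sum_univ_one, this]
    abel
  have hs : ∀ k, v * oneByOne (f.coeff (k + 1)) = Γ k - A * Γ (k + 1) := by
    intro k
    ext i j
    obtain rfl : j = 0 := Subsingleton.elim _ _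
    have := congrArg (fun q => coeff q (k + 1)) (h i)
    simp only [coeff_C_mul, coeff_add, coeff_sub, coeff_X_mul, finsetSum_coeff,
      coeff_C_succ, add_zero] at this
    simp only [Matrix.mul_apply, Matrix.sub_apply, oneByOne, Γ, Matrix.of_apply,
      Fin.sum_univ_one, this]
  have tel : ∀ N, ∑ k ∈ Finset.range (N + 1), A ^ k * v * oneByOne (f.coeff k) =
      r - A ^ (N + 1) * Γ N := by
    intro N
    induction N with
    | zero => simp [h0]
    | succ N ih =>
      rw [Finset.sum_range_succ, ih, Matrix.mul_assoc, hs, Matrix.mul_sub, ← Matrix.mul_assoc,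
        ← pow_succ]
      abel
  -- sum past the degrees of `f` and of all the entries of `G`
  let d := Finset.univ.sup fun i => (G i).natDegree
  let N := f.natDegree + d + 1
  have hΓ : Γ N = 0 := by
    ext i j
    have : (G i).natDegree ≤ d := Finset.le_sup (f := fun i => (G i).natDegree) (Finset.mem_univ i)
    exact coeff_eq_zero_of_natDegree_lt (by omega)
  have hN := tel N
  rw [hΓ, Matrix.mul_zero, sub_zero] at hN
  rw [← hN, leftEval]
  refine Finset.sum_subset (fun k hk => ?_) (fun k _ hk => ?_)
  · simp only [Finset.mem_range] at hk ⊢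
    omega
  · have hk' : f.coeff k = 0 := coeff_eq_zero_of_natDegree_lt (by simpa using hk)
    have : oneByOne (0 : F) = 0 := rfl
    rw [hk', this, Matrix.mul_zero]

/-- Multiplication by the companion matrix: row `i` of `C_ℓ(p) G`, where `G = (γ₁, …, γₙ)ᵀ`, is
`γᵢ - pᵢ γₙ` with rows counted from `0`, the term `γᵢ` being absent for `i = 0`. -/
lemma sum_Cl_mul {F : Type*} [DivisionRing F] {n : ℕ} (p : F[X]) (γ : ℕ → F[X]) (i : Fin n) :
    ∑ j : Fin n, C (Cl n p i j) * γ (j + 1) =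
      (if (i : ℕ) = 0 then 0 else γ i) - C (p.coeff i) * γ n := by
  obtain ⟨m, rfl⟩ : ∃ m, n = m + 1 := ⟨n - 1, by have := i.2; omega⟩
  rw [Fin.sum_univ_castSucc]
  have hlast : C (Cl (m + 1) p i (Fin.last m)) * γ ((Fin.last m : Fin (m + 1)) + 1 : ℕ) =
      -(C (p.coeff i) * γ (m + 1)) := by
    simp [Cl]
  rw [hlast, ← sub_eq_add_neg]
  congr 1
  have hterm : ∀ j : Fin m, C (Cl (m + 1) p i j.castSucc) * γ ((j.castSucc : ℕ) + 1) =
      if (i : ℕ) = j + 1 then γ i else 0 := by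
    intro j
    have := j.2.ne
    by_cases hij : (i : ℕ) = j + 1 <;> simp [Cl, this, hij]
  rw [Finset.sum_congr rfl fun j _ => hterm j]
  split_ifs with hi
  · exact Finset.sum_eq_zero fun j _ => if_neg (by omega)
  · have hi' : (i : ℕ) - 1 < m := by have := i.2; omega
    rw [Finset.sum_eq_single (⟨(i : ℕ) - 1, hi'⟩ : Fin m)]
    · exact if_pos (by simp only; omega)
    · intro j _ hj
      refine if_neg fun h => hj (Fin.ext ?_)
      simp only
      omega
    · simp

/-- Proposition `P:nul`: left division `f = p·g + b` by a monic `p` of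
degree `n` gives `gₙ = g`, the left evaluation `(e₁ f)^ℓ(C_ℓ(p))` is the coefficient
column of `b`, and `e₁·f(z) = (z·I_n − C_ℓ(p))·G(z) + b` with `G_j = g_j`. -/
theorem statement3 {F : Type*} [DivisionRing F] {n : ℕ} (hn : 1 ≤ n) (p : F[X])
    (hmon : p.Monic) (hdeg : p.natDegree = n) (f g b : F[X])
    (hdiv : f = p * g + b) (hb : b.degree < (n : WithBot ℕ)) :
    (Polynomial.divX^[n] p * g + Polynomial.divX^[n] b = g) ∧
    (leftEval (Cl n p) (e1 F n) f =
      Matrix.of fun (i : Fin n) (_ : Fin 1) => b.coeff (i : ℕ)) ∧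
    ((Matrix.of fun (i : Fin n) (_ : Fin 1) => Polynomial.C (e1 F n i 0) * f) =
      (Matrix.diagonal (fun _ => (X : F[X])) - (Cl n p).map Polynomial.C) *
        (Matrix.of fun (i : Fin n) (_ : Fin 1) =>
          Polynomial.divX^[(i : ℕ) + 1] p * g + Polynomial.divX^[(i : ℕ) + 1] b) +
      Matrix.of fun (i : Fin n) (_ : Fin 1) => Polynomial.C (b.coeff (i : ℕ))) := by
  have hgn : Polynomial.divX^[n] p * g + Polynomial.divX^[n] b = g := by
    have hp : Polynomial.divX^[n] p = 1 := by
      ext k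
      rw [coeff_iterate_divX, coeff_one]
      split_ifs with hk
      · rw [hk, zero_add, ← hdeg]
        exact hmon
      · exact coeff_eq_zero_of_natDegree_lt (by omega)
    have hb0 : Polynomial.divX^[n] b = 0 := by
      ext k
      rw [coeff_iterate_divX, coeff_zero]
      refine coeff_eq_zero_of_degree_lt (hb.trans_le ?_)
      exact_mod_cast Nat.le_add_left n k
    rw [hp, hb0, one_mul, add_zero]
  have hrow : ∀ i : Fin n, C (e1 F n i 0) * f =
      X * (Polynomial.divX^[(i : ℕ) + 1] p * g + Polynomial.divX^[(i : ℕ) + 1] b) -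
        ∑ j : Fin n, C (Cl n p i j) *
          (Polynomial.divX^[(j : ℕ) + 1] p * g + Polynomial.divX^[(j : ℕ) + 1] b) +
        C (b.coeff (i : ℕ)) := by
    intro i
    rw [sum_Cl_mul p (fun k => Polynomial.divX^[k] p * g + Polynomial.divX^[k] b) i]
    simp only [hgn]
    have hrec := quot_rec p g b i
    split_ifs with hi
    · have he : e1 F n i 0 = 1 := by simp [e1, hi]
      rw [hi] at hrec ⊢
      rw [he, C_1, one_mul, hdiv]
      refine Eq.trans hrec ?_
      abel
    · have he : e1 F n i 0 = 0 := by simp [e1, hi]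
      rw [he, C_0, zero_mul, hrec]
      abel
  refine ⟨hgn, leftEval_of_division _ _ _ _ _ hrow, ?_⟩
  ext1 i j
  rw [Matrix.add_apply, Matrix.sub_mul, Matrix.sub_apply, Matrix.diagonal_mul, Matrix.mul_apply]
  exact hrow i
end

section
/- Let F be a division ring, n ≥ 1, α_1, …, α_n ∈ F, A := diag(α_1, …, α_n) ∈ F^{n×n}, and v := (1, 1, …, 1)^T ∈ F^{n×1}. Then the pair (A, v) is controllable (equivalently, the left Vandermonde matrix [α_i^{j−1}]_{i,j=1}^n is invertible) if and only if the set {α_1, …, α_n} is left P-independent, i.e., every nonzero f ∈ F[z] satisfying f^ℓ(α_i) = 0 for all i = 1, …, n has degree ≥ n. Dually, the pair (v^T, A) is observable if and only if every nonzero f ∈ F[z] satisfying f^r(α_i) = 0 for all i has degree ≥ n. -/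
/-!
The entry `(i, j)` of the controllability matrix is `α i ^ j`, so multiplying it by a column
`x` gives the values at the points `α i` (evaluated on the left) of the polynomial
`∑ j < n, x j z ^ j`. A nonzero polynomial of degree less than `n` vanishing on the left at all
`α i` is therefore the same thing as a nonzero column in the kernel of this matrix. Over a
division ring a square matrix is invertible as soon as its kernel on columns (or on rows) is zero,
by a dimension count (`isUnit_of_mulVec` and `isUnit_of_vecMul`). Noncommutativity forces
columns to be treated as a right vector space and rows as a left one; the observability half is
the same argument with rows.
-/

open Polynomial Matrix Finset

section Aux

variable {F : Type*} [DivisionRing F] {n : ℕ}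

/-- `N ↦ M * N` is an endomorphism of a finite-dimensional right vector space, so if it is
injective it is surjective and `M` has an inverse. -/
theorem isUnit_of_mulVec (M : Matrix (Fin n) (Fin n) F)
    (h : ∀ x : Fin n → F, M *ᵥ x = 0 → x = 0) : IsUnit M := by
  have inj : ∀ N : Matrix (Fin n) (Fin n) F, M * N = 0 → N = 0 := by
    intro N hN
    ext i j
    refine congrFun (h (fun k => N k j) ?_) i
    ext k
    exact congrFun (congrFun hN k) j
  let L : Matrix (Fin n) (Fin n) F →ₗ[Fᵐᵒᵖ] Matrix (Fin n) (Fin n) F :=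
    { toFun := fun N => M * N
      map_add' := fun a b => Matrix.mul_add M a b
      map_smul' := fun c a => Matrix.mul_smul M c a }
  -- `F` is a one-dimensional right vector space over itself.
  have : Module.Finite Fᵐᵒᵖ F := Module.Finite.equiv (MulOpposite.opLinearEquiv Fᵐᵒᵖ (M := F)).symm
  have : Module.Finite Fᵐᵒᵖ (Matrix (Fin n) (Fin n) F) :=
    inferInstanceAs (Module.Finite Fᵐᵒᵖ (Fin n → Fin n → F))
  have hL : Function.Injective L := (injective_iff_map_eq_zero L).2 inj
  obtain ⟨N, hN⟩ := LinearMap.injective_iff_surjective.1 hL 1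
  replace hN : M * N = 1 := hN
  have hN' : N * M = 1 := sub_eq_zero.1 <| inj _ <| by
    rw [mul_sub, ← mul_assoc, hN, one_mul, mul_one, sub_self]
  exact ⟨⟨M, N, hN, hN'⟩, rfl⟩

/-- The analogue of `isUnit_of_mulVec` for rows, which form a left vector space. -/
theorem isUnit_of_vecMul (M : Matrix (Fin n) (Fin n) F)
    (h : ∀ x : Fin n → F, x ᵥ* M = 0 → x = 0) : IsUnit M := by
  have inj : ∀ N : Matrix (Fin n) (Fin n) F, N * M = 0 → N = 0 := by
    intro N hN
    ext i j
    refine congrFun (h (N i) ?_) j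
    ext k
    exact congrFun (congrFun hN i) k
  let L : Matrix (Fin n) (Fin n) F →ₗ[F] Matrix (Fin n) (Fin n) F :=
    { toFun := fun N => N * M
      map_add' := fun a b => Matrix.add_mul a b M
      map_smul' := fun c a => Matrix.smul_mul c a M }
  have hL : Function.Injective L := (injective_iff_map_eq_zero L).2 inj
  obtain ⟨N, hN⟩ := LinearMap.injective_iff_surjective.1 hL 1
  replace hN : N * M = 1 := hN
  have hN' : M * N = 1 := sub_eq_zero.1 <| inj _ <| by
    rw [sub_mul, mul_assoc, hN, one_mul, mul_one, sub_self]
  exact ⟨⟨M, N, hN', hN⟩, rfl⟩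

/-- Polynomials of degree less than `n` correspond to coefficient vectors `Fin n → F`. The map
`g i j` stands for multiplication by the `j`-th power of the `i`-th point, on either side, so that
both one-sided evaluations are covered. -/
theorem forall_vec_iff_forall_poly (hn : 1 ≤ n) (g : Fin n → ℕ → F → F)
    (hg : ∀ i j, g i j 0 = 0) :
    (∀ x : Fin n → F, (∀ i, ∑ j : Fin n, g i j (x j) = 0) → x = 0) ↔
      ∀ f : F[X], f ≠ 0 →
        (∀ i, ∑ j ∈ Finset.range (f.natDegree + 1), g i j (f.coeff j) = 0) →
        n ≤ f.natDegree := by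
  have key : ∀ f : F[X], f.natDegree < n → ∀ i,
      ∑ j ∈ Finset.range (f.natDegree + 1), g i j (f.coeff j) =
        ∑ j : Fin n, g i j (f.coeff j) := by
    intro f hf i
    rw [Fin.sum_univ_eq_sum_range (fun j => g i j (f.coeff j)) n]
    refine Finset.sum_subset (Finset.range_mono hf) fun j _ hj => ?_
    rw [Polynomial.coeff_eq_zero_of_natDegree_lt (by simpa using hj), hg]
  constructor
  · intro h f hf0 hf
    by_contra! hlt
    have hx := h (fun j => f.coeff j) fun i => (key f hlt i).symm.trans (hf i)
    exact hf0 <| Polynomial.leadingCoeff_eq_zero.1 (congrFun hx ⟨f.natDegree, hlt⟩)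
  · intro h x hx
    set f : F[X] := ∑ j : Fin n, Polynomial.monomial (j : ℕ) (x j) with hf
    have hc : ∀ j : Fin n, f.coeff j = x j := by
      intro j
      simp [hf, Polynomial.finsetSum_coeff, Polynomial.coeff_monomial, Fin.val_inj]
    have hdeg : f.natDegree < n :=
      -- `n ≥ 1` is used here: the zero polynomial has `natDegree` zero.
      lt_of_le_of_lt (Polynomial.natDegree_sum_le_of_forall_le (n := n - 1) _ _ fun j _ =>
        (Polynomial.natDegree_monomial_le _).trans (by omega)) (by omega)
    have hf0 : f = 0 := by
      by_contra hne
      refine absurd (h f hne fun i => ?_) (not_le.2 hdeg)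
      rw [key f hdeg]
      simpa only [hc] using hx i
    ext j
    rw [← hc j, hf0]
    simp

theorem ctrbMat_diagonal_ones (α : Fin n → F) :
    ctrbMat (Matrix.diagonal α) (Matrix.of fun _ _ => (1 : F)) =
      Matrix.of fun (i j : Fin n) => α i ^ (j : ℕ) := by
  ext i j
  simp [ctrbMat, Matrix.diagonal_pow, Matrix.diagonal_mul]

theorem obsMat_ones_diagonal (α : Fin n → F) :
    obsMat (Matrix.of fun _ _ => (1 : F)) (Matrix.diagonal α) =
      Matrix.of fun (i j : Fin n) => α j ^ (i : ℕ) := by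
  ext i j
  simp [obsMat, Matrix.diagonal_pow, Matrix.mul_diagonal]

end Aux

/-- Proposition `P:br4`: for `A = diag(α₁,…,αₙ)` and `v = (1,…,1)ᵀ`, the
controllability matrix is the left Vandermonde matrix, the pair `(A, v)` is controllable
iff `{α₁,…,αₙ}` is left P-independent, and `(vᵀ, A)` is observable iff it is right
P-independent. -/
theorem statement7 {F : Type*} [DivisionRing F] {n : ℕ} (hn : 1 ≤ n) (α : Fin n → F) :
    (ctrbMat (Matrix.diagonal α) (Matrix.of fun _ _ => (1 : F)) =
      Matrix.of fun (i j : Fin n) => α i ^ (j : ℕ)) ∧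
    (IsUnit (ctrbMat (Matrix.diagonal α) (Matrix.of fun _ _ => (1 : F))) ↔
      ∀ f : F[X], f ≠ 0 →
        (∀ i, ∑ j ∈ Finset.range (f.natDegree + 1), α i ^ j * f.coeff j = 0) →
        n ≤ f.natDegree) ∧
    (IsUnit (obsMat (Matrix.of fun _ _ => (1 : F)) (Matrix.diagonal α)) ↔
      ∀ f : F[X], f ≠ 0 →
        (∀ i, ∑ j ∈ Finset.range (f.natDegree + 1), f.coeff j * α i ^ j = 0) →
        n ≤ f.natDegree) := by
  refine ⟨ctrbMat_diagonal_ones α, ?_, ?_⟩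
  · rw [ctrbMat_diagonal_ones,
      ← forall_vec_iff_forall_poly hn (fun i j c => α i ^ j * c) (by simp)]
    refine ⟨fun hM x hx => ?_, fun h => isUnit_of_mulVec _ fun x hx => h x (congrFun hx)⟩
    obtain ⟨N, hN⟩ := hM.exists_left_inv
    have hx' : (Matrix.of fun (i j : Fin n) => α i ^ (j : ℕ)) *ᵥ x = 0 := funext hx
    rw [← Matrix.one_mulVec x, ← hN, ← Matrix.mulVec_mulVec, hx', Matrix.mulVec_zero]
  · rw [obsMat_ones_diagonal,
      ← forall_vec_iff_forall_poly hn (fun i j c => c * α i ^ j) (by simp)]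
    refine ⟨fun hM x hx => ?_, fun h => isUnit_of_vecMul _ fun x hx => h x (congrFun hx)⟩
    obtain ⟨N, hN⟩ := hM.exists_right_inv
    have hx' : x ᵥ* (Matrix.of fun (i j : Fin n) => α j ^ (i : ℕ)) = 0 := funext hx
    rw [← Matrix.vecMul_one x, ← hN, ← Matrix.vecMul_vecMul, hx', Matrix.zero_vecMul]
end

section
/- Let F be a division ring, n ≥ 1, and let (A, v) and (A′, v′) be controllable pairs with A, A′ ∈ F^{n×n}. Let p, p′ be the monic polynomials with {g : (vg)^ℓ(A) = 0} = p·F[z] and {g : (v′g)^ℓ(A′) = 0} = p′·F[z]. Then there exists an invertible T ∈ F^{n×n} with A′ = T A T^{−1} if and only if p and p′ are similar polynomials, i.e., there exists an invertible W ∈ F^{n×n} with C_ℓ(p′) = W C_ℓ(p) W^{−1}. -/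
/-!
A controllable pair `(A, v)` is, in the basis `v, A v, …, A^(n-1) v`, the companion matrix of its
minimal polynomial `p`. Controllability forces `p` to have degree exactly `n`: no nonzero polynomial
of degree `< n` annihilates the pair (`ctrb_coeff_eq_zero`), while expanding `A^n v` in the basis
gives a monic annihilator of degree `n`, which `p` must divide on the left (`natDegree_minpoly`).
The relation `(v p)(A) = 0` then expresses `A^n v` through the coefficients of `p`, which is the
last column of the identity `A K = K C_ℓ(p)`, with `K` the controllability matrix
(`mul_ctrbMat_eq`). Hence `A` is similar to `C_ℓ(p)` and `A'` to `C_ℓ(p')`, and the equivalence is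
transitivity of similarity.
-/

open Polynomial Matrix Finset

section Helpers

variable {F : Type*} [DivisionRing F] {n : ℕ}

/-- The evaluation may be computed over any range that contains all exponents of `g`. -/
lemma leftEval_apply (A : Matrix (Fin n) (Fin n) F) (v : Matrix (Fin n) (Fin 1) F) (g : F[X])
    {N : ℕ} (hN : g.natDegree < N) (i : Fin n) :
    leftEval A v g i 0 = ∑ j ∈ Finset.range N, (A ^ j * v) i 0 * g.coeff j := by
  have h1 : leftEval A v g i 0
      = ∑ j ∈ Finset.range (g.natDegree + 1), (A ^ j * v) i 0 * g.coeff j := by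
    simp only [leftEval, Matrix.sum_apply]
    refine Finset.sum_congr rfl fun j _ => ?_
    rw [Matrix.mul_apply]
    simp [oneByOne]
  rw [h1]
  refine Finset.sum_subset (Finset.range_subset_range.2 hN) fun j _ hj => ?_
  rw [Polynomial.coeff_eq_zero_of_natDegree_lt, mul_zero]
  simpa using hj

lemma ctrbMat_mulVec (A : Matrix (Fin n) (Fin n) F) (v : Matrix (Fin n) (Fin 1) F) (x : ℕ → F)
    (i : Fin n) :
    (ctrbMat A v *ᵥ fun j => x j) i = ∑ j ∈ Finset.range n, (A ^ j * v) i 0 * x j := by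
  rw [Finset.sum_range]
  rfl

lemma ctrb_coeff_eq_zero {A : Matrix (Fin n) (Fin n) F} {v : Matrix (Fin n) (Fin 1) F}
    (hc : IsUnit (ctrbMat A v)) {g : F[X]} (hg : g.natDegree < n) (h0 : leftEval A v g = 0) :
    g = 0 := by
  obtain ⟨u, hu⟩ := hc
  have h1 : ctrbMat A v *ᵥ (fun j : Fin n => g.coeff j) = 0 := by
    ext i
    rw [ctrbMat_mulVec A v g.coeff, ← leftEval_apply A v g hg, h0]
    rfl
  have h2 : (fun j : Fin n => g.coeff j) = 0 := by
    have := congrArg (fun w => (↑u⁻¹ : Matrix (Fin n) (Fin n) F) *ᵥ w) h1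
    simpa [← hu, Matrix.mulVec_mulVec] using this
  ext j
  by_cases hj : j < n
  · exact congrFun h2 ⟨j, hj⟩
  · exact Polynomial.coeff_eq_zero_of_natDegree_lt (by omega)

/-- The expansion of `A ^ n * v` in the basis `v, A v, …` yields a monic annihilator. -/
lemma exists_monic_annihilator {A : Matrix (Fin n) (Fin n) F} {v : Matrix (Fin n) (Fin 1) F}
    (hc : IsUnit (ctrbMat A v)) :
    ∃ g : F[X], g.Monic ∧ g.natDegree = n ∧ leftEval A v g = 0 := by
  obtain ⟨u, hu⟩ := hc
  set x : Fin n → F := (↑u⁻¹ : Matrix (Fin n) (Fin n) F) *ᵥ fun i => -(A ^ n * v) i 0 with hx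
  have hKx : ctrbMat A v *ᵥ x = fun i => -(A ^ n * v) i 0 := by
    rw [hx, ← hu, Matrix.mulVec_mulVec]
    simp
  set q : F[X] := ∑ i : Fin n, Polynomial.C (x i) * Polynomial.X ^ (i : ℕ) with hq
  have hdeg : q.degree < n := Polynomial.degree_sum_fin_lt x
  have hcoeff : ∀ j : Fin n, q.coeff j = x j := by
    intro j
    simp [hq, Polynomial.coeff_X_pow, Fin.val_inj]
  have hnd : (Polynomial.X ^ n + q).natDegree = n := by
    rw [Polynomial.natDegree_add_eq_left_of_degree_lt] <;> simp [hdeg]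
  refine ⟨Polynomial.X ^ n + q, Polynomial.monic_X_pow_add hdeg, hnd, ?_⟩
  ext i k
  obtain rfl : k = 0 := Subsingleton.elim _ _
  rw [leftEval_apply A v _ (N := n + 1) (by omega), Finset.sum_range_succ]
  have h1 : ∑ j ∈ Finset.range n, (A ^ j * v) i 0 * (Polynomial.X ^ n + q).coeff j
      = (ctrbMat A v *ᵥ x) i := by
    rw [Finset.sum_range]
    refine Finset.sum_congr rfl fun j _ => ?_
    rw [Polynomial.coeff_add, hcoeff, Polynomial.coeff_X_pow, if_neg j.2.ne, zero_add]
    rfl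
  rw [h1, hKx, Polynomial.coeff_add, Polynomial.coeff_X_pow, if_pos rfl,
    Polynomial.coeff_eq_zero_of_degree_lt hdeg]
  simp

lemma natDegree_minpoly {A : Matrix (Fin n) (Fin n) F} {v : Matrix (Fin n) (Fin 1) F}
    (hc : IsUnit (ctrbMat A v)) {p : F[X]} (hp : p.Monic)
    (hpI : ∀ g : F[X], leftEval A v g = 0 ↔ ∃ h : F[X], g = p * h) : p.natDegree = n := by
  refine le_antisymm ?_ (not_lt.1 fun h => ?_)
  · obtain ⟨g, hg, hgn, hg0⟩ := exists_monic_annihilator hc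
    obtain ⟨h, rfl⟩ := (hpI g).1 hg0
    have hh : h ≠ 0 := by
      rintro rfl
      exact hg.ne_zero (mul_zero p)
    rw [Polynomial.natDegree_mul hp.ne_zero hh] at hgn
    omega
  · exact hp.ne_zero (ctrb_coeff_eq_zero hc h ((hpI p).2 ⟨1, (mul_one p).symm⟩))

lemma mul_ctrbMat_eq {A : Matrix (Fin n) (Fin n) F} {v : Matrix (Fin n) (Fin 1) F}
    {p : F[X]} (hp : p.Monic) (hn : p.natDegree = n) (h0 : leftEval A v p = 0) :
    A * ctrbMat A v = ctrbMat A v * Cl n p := by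
  ext i j
  have hL : (A * ctrbMat A v) i j = (A ^ ((j : ℕ) + 1) * v) i 0 := by
    rw [pow_succ', Matrix.mul_assoc]
    rfl
  rw [hL]
  by_cases hj : (j : ℕ) = n - 1
  · have hj' : (j : ℕ) + 1 = n := by have := j.2; omega
    have h1 := leftEval_apply A v p (N := n + 1) (by omega) i
    have hpn : p.coeff n = 1 := hn ▸ hp.coeff_natDegree
    rw [h0, Finset.sum_range_succ, hpn, mul_one, Matrix.zero_apply] at h1
    rw [hj', eq_neg_of_add_eq_zero_right h1.symm, Finset.sum_range,
      Matrix.mul_apply (M := ctrbMat A v),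
      ← Finset.sum_neg_distrib]
    refine Finset.sum_congr rfl fun k _ => ?_
    simp [Cl, hj, ctrbMat]
  · have hlt : (j : ℕ) + 1 < n := by have := j.2; omega
    rw [Matrix.mul_apply (M := ctrbMat A v), Finset.sum_eq_single (⟨(j : ℕ) + 1, hlt⟩ : Fin n)]
    · simp [Cl, hj, ctrbMat]
    · intro k _ hk
      have : (k : ℕ) ≠ (j : ℕ) + 1 := fun h => hk (Fin.ext h)
      simp [Cl, hj, this]
    · simp

/-- A controllable state matrix is similar to the left companion matrix of its minimal polynomial;
the similarity is the controllability matrix. -/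
lemma exists_conj_companion {A : Matrix (Fin n) (Fin n) F} {v : Matrix (Fin n) (Fin 1) F}
    (hc : IsUnit (ctrbMat A v)) {p : F[X]} (hp : p.Monic)
    (hpI : ∀ g : F[X], leftEval A v g = 0 ↔ ∃ h : F[X], g = p * h) :
    IsConj A (Cl n p) := by
  have h := mul_ctrbMat_eq hp (natDegree_minpoly hc hp hpI) ((hpI p).2 ⟨1, (mul_one p).symm⟩)
  obtain ⟨u, hu⟩ := hc
  rw [← hu] at h
  exact IsConj.symm ⟨u, h.symm⟩

lemma isConj_iff_exists_inverse {M : Type*} [Monoid M] (a b : M) :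
    IsConj a b ↔ ∃ t t' : M, t * t' = 1 ∧ t' * t = 1 ∧ b = t * a * t' := by
  constructor
  · rintro ⟨u, hu⟩
    exact ⟨u, ↑u⁻¹, u.mul_inv, u.inv_mul, (Units.eq_mul_inv_iff_mul_eq u).2 hu.symm⟩
  · rintro ⟨t, t', h1, h2, rfl⟩
    refine ⟨⟨t, t', h1, h2⟩, ?_⟩
    change t * a = t * a * t' * t
    rw [mul_assoc (t * a), h2, mul_one]

end Helpers

/-- Proposition `R:2.4`(1): the state matrices of two controllable pairs
are similar if and only if the minimal polynomials of the pairs are similar polynomials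
(i.e. their left companion matrices are similar). -/
theorem statement10 {F : Type*} [DivisionRing F] {n : ℕ} (hn : 1 ≤ n)
    (A A' : Matrix (Fin n) (Fin n) F) (v v' : Matrix (Fin n) (Fin 1) F)
    (hc : IsUnit (ctrbMat A v)) (hc' : IsUnit (ctrbMat A' v'))
    (p p' : F[X]) (hp : p.Monic) (hp' : p'.Monic)
    (hpI : ∀ g : F[X], leftEval A v g = 0 ↔ ∃ h : F[X], g = p * h)
    (hpI' : ∀ g : F[X], leftEval A' v' g = 0 ↔ ∃ h : F[X], g = p' * h) :
    (∃ T T' : Matrix (Fin n) (Fin n) F, T * T' = 1 ∧ T' * T = 1 ∧ A' = T * A * T') ↔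
    (∃ W W' : Matrix (Fin n) (Fin n) F,
      W * W' = 1 ∧ W' * W = 1 ∧ Cl n p' = W * Cl n p * W') := by
  have hA := exists_conj_companion hc hp hpI
  have hA' := exists_conj_companion hc' hp' hpI'
  rw [← isConj_iff_exists_inverse, ← isConj_iff_exists_inverse]
  exact ⟨fun h => (hA.symm.trans h).trans hA', fun h => (hA.trans h).trans hA'.symm⟩
end
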